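/- (Strict improvement of one exact backward sweep at a non-stationary point; established in the proof of Theorem 2(2).) Let U : E → ℝ be differentiable at x = (x_0, …, x_{T−1}) with nonzero total derivative at x. Suppose y = (y_0, …, y_{T−1}) ∈ E is obtained from x by one backward sweep of exact block maximization: y_{T−1} is the unique maximizer of z ↦ U(x_0, …, x_{T−2}, z) over ℝ^{n_{T−1}}; for t = T−2, …, 1, y_t is the unique maximizer of z ↦ U(x_0, …, x_{t−1}, z, y_{t+1}, …, y_{T−1}) over ℝ^{n_t}; and y_0 is the unique maximizer of z ↦ U(z, y_1, …, y_{T−1}) over ℝ^{n_0} (all maximizers assumed to exist and to be unique). Then U(y) > U(x). -/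

import Mathlib

open Filter Topology

/-- Splice: coordinates `< k` from `a`, coordinates `≥ k` from `b`. -/
def splice {T : ℕ} {n : Fin T → ℕ}
    (a b : (t : Fin T) → EuclideanSpace ℝ (Fin (n t))) (k : ℕ) :
    (t : Fin T) → EuclideanSpace ℝ (Fin (n t)) :=
  fun t => if (t : ℕ) < k then a t else b t

/-!
The sweep replaces the blocks of `x` by those of `y` one at a time, and each replacement that
changes a block strictly increases `U` because the maximizer is unique. Hence either `U x < U y` or
the sweep changes nothing. In the latter case every block of `x` is optimal given the others, so all
partial derivatives of `U` at `x` vanish by Fermat's theorem, and with them the total derivative.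
-/

section BlockDerivative

variable {ι : Type*} [Finite ι] [DecidableEq ι] {E : ι → Type*} [∀ i, NormedAddCommGroup (E i)]

theorem hasFDerivAt_comp_update {𝕜 F : Type*} [NontriviallyNormedField 𝕜]
    [∀ i, NormedSpace 𝕜 (E i)] [NormedAddCommGroup F] [NormedSpace 𝕜 F]
    {f : (∀ i, E i) → F} {f' : (∀ i, E i) →L[𝕜] F} {x : ∀ i, E i}
    (hf : HasFDerivAt f f' x) (i : ι) :
    HasFDerivAt (fun z => f (Function.update x i z))
      (f' ∘L ContinuousLinearMap.single 𝕜 E i) (x i) := by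
  have := Fintype.ofFinite ι
  have hf_update : HasFDerivAt f f' (Function.update x i (x i)) := by
    rwa [Function.update_eq_self]
  convert! hf_update.comp (x i) (hasFDerivAt_update x (x i)) using 2
  ext v j
  obtain rfl | hj := eq_or_ne j i <;> simp [*]

theorem hasFDerivAt_eq_zero_of_forall_isLocalMax_update [∀ i, NormedSpace ℝ (E i)]
    {f : (∀ i, E i) → ℝ} {f' : StrongDual ℝ (∀ i, E i)} {x : ∀ i, E i} (hf : HasFDerivAt f f' x)
    (hmax : ∀ i, IsLocalMax (fun z => f (Function.update x i z)) (x i)) : f' = 0 := by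
  have hpartial (i : ι) : f' ∘L ContinuousLinearMap.single ℝ E i = 0 :=
    (hmax i).hasFDerivAt_eq_zero (hasFDerivAt_comp_update hf i)
  refine ContinuousLinearMap.coe_injective (LinearMap.pi_ext fun i v => ?_)
  exact DFunLike.congr_fun (hpartial i) v

end BlockDerivative

section Sweep

variable {ι : Type*} [LinearOrder ι] {α : ι → Type*} {β : Type*} [Preorder β]

/-- `y` is obtained from `x` by one backward sweep of exact block maximization of `U`: running
through the blocks in decreasing order, `y t` is the unique maximizer of `U` in block `t` when the
blocks below `t` come from `x` and those above `t` from `y`. The point `(Set.Iio t).piecewise x y`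
has `y t` in block `t`, so it is the maximizing point. -/
def IsBackwardSweep (U : (∀ t, α t) → β) (x y : ∀ t, α t) : Prop :=
  ∀ t z, z ≠ y t →
    U (Function.update ((Set.Iio t).piecewise x y) t z) < U ((Set.Iio t).piecewise x y)

namespace IsBackwardSweep

variable {U : (∀ t, α t) → β} {x y : ∀ t, α t}

theorem piecewise_eq_or_lt (h : IsBackwardSweep U x y) (s : Finset ι)
    (hs : IsLowerSet (s : Set ι)) : s.piecewise x y = y ∨ U (s.piecewise x y) < U y := by
  induction s using Finset.induction_on_max with
  | empty => simp
  | insert a s ha ih =>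
    have hs_eq : (s : Set ι) = Set.Iio a := by
      refine Set.Subset.antisymm ha fun b hb => ?_
      exact Finset.mem_of_mem_insert_of_ne (hs (le_of_lt hb) (Finset.mem_insert_self a s)) hb.ne
    have ih := ih (hs_eq ▸ isLowerSet_Iio a)
    have hs_piecewise : s.piecewise x y = (Set.Iio a).piecewise x y := by
      ext1 b
      simp only [Finset.piecewise, Set.piecewise, ← Finset.mem_coe, hs_eq]
    have ha_s : a ∉ s := fun has => (ha a has).false
    rw [Finset.piecewise_insert]
    obtain hxy | hxy := eq_or_ne (x a) (y a)
    · rwa [hxy, ← Finset.piecewise_eq_of_notMem s x y ha_s, Function.update_eq_self]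
    · have hlt : U (Function.update (s.piecewise x y) a (x a)) < U (s.piecewise x y) := by
        simpa only [hs_piecewise] using h a (x a) hxy
      obtain hy | hy := ih
      · exact .inr (hlt.trans_eq (congrArg U hy))
      · exact .inr (hlt.trans hy)

theorem eq_or_lt [Finite ι] (h : IsBackwardSweep U x y) : x = y ∨ U x < U y := by
  have := Fintype.ofFinite ι
  simpa using h.piecewise_eq_or_lt Finset.univ (by simp [isLowerSet_univ])

theorem le_of_self (h : IsBackwardSweep U x x) (t : ι) (z : α t) :
    U (Function.update x t z) ≤ U x := by
  obtain rfl | hz := eq_or_ne z (x t)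
  · rw [Function.update_eq_self]
  · simpa only [Set.piecewise_same] using (h t z hz).le

end IsBackwardSweep

end Sweep

theorem emc_sweep_strict_improvement_general {ι : Type*} [Finite ι] [LinearOrder ι]
    {E : ι → Type*} [∀ t, NormedAddCommGroup (E t)] [∀ t, NormedSpace ℝ (E t)]
    {U : (∀ t, E t) → ℝ} {U' : StrongDual ℝ (∀ t, E t)} {x y : ∀ t, E t}
    (hU : HasFDerivAt U U' x) (hU' : U' ≠ 0) (hsweep : IsBackwardSweep U x y) : U x < U y := by
  refine hsweep.eq_or_lt.resolve_left ?_
  rintro rfl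
  refine hU' (hasFDerivAt_eq_zero_of_forall_isLocalMax_update hU fun t => ?_)
  exact .of_forall fun z => by simpa only [Function.update_eq_self] using hsweep.le_of_self t z

section Splice

variable {T : ℕ} {n : Fin T → ℕ} (x y : (t : Fin T) → EuclideanSpace ℝ (Fin (n t))) (t : Fin T)

theorem splice_eq_piecewise_Iio : splice x y t = (Set.Iio t).piecewise x y :=
  rfl

theorem update_splice_succ (z : EuclideanSpace ℝ (Fin (n t))) :
    Function.update (splice x y (t + 1)) t z = Function.update (splice x y t) t z := by
  ext1 s
  obtain rfl | hs := eq_or_ne s t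
  · simp only [Function.update_self]
  · have hlt : (s : ℕ) < t + 1 ↔ (s : ℕ) < t := by omega
    simp only [Function.update_of_ne hs, splice, hlt]

end Splice

/-- Strict improvement of one exact backward sweep at a non-stationary point:
if `U` is differentiable at `x` with nonzero derivative, and `y` is obtained from `x` by
one backward sweep of exact block maximization (for each block `t`, `y_t` is the unique
maximizer of `z ↦ U(x_0, …, x_{t-1}, z, y_{t+1}, …, y_{T-1})`, the generic point being
`Function.update (splice x y (t+1)) t z` and the maximizing point `splice x y t`), then
`U(y) > U(x)`. -/
theorem emc_sweep_strict_improvement {T : ℕ} {n : Fin T → ℕ}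
    (hT : 1 ≤ T) (hn : ∀ t, 1 ≤ n t)
    (U : ((t : Fin T) → EuclideanSpace ℝ (Fin (n t))) → ℝ)
    (x y : (t : Fin T) → EuclideanSpace ℝ (Fin (n t)))
    (hdiff : DifferentiableAt ℝ U x)
    (hne : fderiv ℝ U x ≠ 0)
    (hmax : ∀ (t : Fin T) (z : EuclideanSpace ℝ (Fin (n t))),
      U (Function.update (splice x y ((t : ℕ) + 1)) t z) ≤ U (splice x y (t : ℕ)))
    (huniq : ∀ (t : Fin T) (z : EuclideanSpace ℝ (Fin (n t))), z ≠ y t →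
      U (Function.update (splice x y ((t : ℕ) + 1)) t z) < U (splice x y (t : ℕ))) :
    U x < U y := by
  refine emc_sweep_strict_improvement_general hdiff.hasFDerivAt hne fun t z hz => ?_
  simpa only [update_splice_succ, splice_eq_piecewise_Iio] using huniq t z hz
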